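/- For all M > 0 and λ > 0 there exists a constant C > 0 such that for all α > 0 and all x, y ≥ −M, |A(x+α, y) − A(x, y)| ≤ α · C e^{−λ(x+y)}, where A is the Airy kernel. -/

import Mathlib

/-!
Fix `lam > 0` and let `f x w = exp (i (w³/3 + x w))`, an entire function of `w` with
`‖f x (t + i s)‖ = exp (s³/3 - x s - s t²)`. Integrating `f x` over the boundary of the rectangle
`[0, R] × [0, lam]` and letting `R → ∞`, the right side vanishes, and the left side contributes
`i` times a real number. Hence `Ai x = π⁻¹ Re ∫_0^∞ f x (t + i lam) dt` (`Ai_eq`).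

The Gaussian decay in `t` then gives, for every real `x`, the bounds `|Ai x| ≤ C exp (-lam x)`
(`Ai_bound`) and `|Ai (x + α) - Ai x| ≤ α C exp (-lam x)` (`Ai_diff_bound`), the latter because
`‖exp (i α w) - 1‖ ≤ α ‖w‖` for `Im w ≥ 0`. Multiplying the two bounds and integrating
`exp (-2 lam z)` over `z > 0` proves the theorem.
-/

open MeasureTheory Real Filter

/-- The Airy function `Ai(x) = (1/π)·lim_{R→∞} ∫_0^R cos(t³/3 + x·t) dt`. -/
noncomputable def Ai (x : ℝ) : ℝ :=
  (1 / Real.pi) * limUnder Filter.atTop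
    (fun R : ℝ => ∫ t in (0:ℝ)..R, Real.cos (t ^ 3 / 3 + x * t))

/-- The Airy kernel `A(x,y) = ∫_0^∞ Ai(x+z)·Ai(y+z) dz`. -/
noncomputable def airyKernel (x y : ℝ) : ℝ :=
  ∫ z in Set.Ioi (0:ℝ), Ai (x + z) * Ai (y + z)

open Set Topology

/-- The integrand `exp (i (w³/3 + x w))` of the contour integral for `Ai x`. -/
noncomputable def airyIntegrand (x : ℝ) (w : ℂ) : ℂ :=
  Complex.exp (Complex.I * (w ^ 3 / 3 + x * w))

lemma norm_airyIntegrand (x t s : ℝ) :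
    ‖airyIntegrand x (t + s * Complex.I)‖ = Real.exp (s ^ 3 / 3 - x * s - s * t ^ 2) := by
  have h : Complex.I * (((t : ℂ) + s * Complex.I) ^ 3 / 3 + x * (t + s * Complex.I)) =
      ((s ^ 3 / 3 - x * s - s * t ^ 2 : ℝ) : ℂ) +
        ((t ^ 3 / 3 - t * s ^ 2 + x * t : ℝ) : ℂ) * Complex.I := by
    push_cast
    linear_combination (t ^ 2 * s + x * s + (t * s ^ 2) * Complex.I +
      s ^ 3 / 3 * (Complex.I ^ 2 - 1)) * Complex.I_sq
  rw [airyIntegrand, Complex.norm_exp, h]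
  simp only [Complex.add_re, Complex.re_ofReal_mul, Complex.ofReal_re, Complex.I_re, mul_zero,
    add_zero]

lemma continuous_airyIntegrand_uncurry (s : ℝ) :
    Continuous (fun p : ℝ × ℝ => airyIntegrand p.1 (p.2 + s * Complex.I)) := by
  unfold airyIntegrand
  fun_prop

lemma continuous_airyIntegrand (x : ℝ) : Continuous (airyIntegrand x) := by
  unfold airyIntegrand
  fun_prop

lemma differentiable_airyIntegrand (x : ℝ) : Differentiable ℂ (airyIntegrand x) := by
  unfold airyIntegrand
  fun_prop

lemma integrable_gaussian_weight {lam : ℝ} (hlam : 0 < lam) :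
    Integrable (fun t : ℝ => (|t| + lam) * Real.exp (-lam * t ^ 2)) := by
  have h1 := (integrable_mul_exp_neg_mul_sq hlam).norm
  have h2 := (integrable_exp_neg_mul_sq hlam).const_mul lam
  refine (h1.add h2).congr (ae_of_all _ fun t => ?_)
  simp only [Pi.add_apply, norm_mul, Real.norm_eq_abs, Real.abs_exp]
  ring

lemma norm_airyIntegrand_shift (lam x t : ℝ) :
    ‖airyIntegrand x (t + lam * Complex.I)‖ =
      Real.exp (lam ^ 3 / 3) * Real.exp (-lam * x) * Real.exp (-lam * t ^ 2) := by
  rw [norm_airyIntegrand, ← Real.exp_add, ← Real.exp_add]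
  congr 1
  ring

lemma integrable_airyIntegrand {lam : ℝ} (hlam : 0 < lam) (x : ℝ) :
    Integrable (fun t : ℝ => airyIntegrand x (t + lam * Complex.I)) := by
  have h2 := (integrable_exp_neg_mul_sq hlam).const_mul
    (Real.exp (lam ^ 3 / 3) * Real.exp (-lam * x))
  refine h2.mono' ?_ (ae_of_all _ fun t => (norm_airyIntegrand_shift lam x t).le)
  exact ((continuous_airyIntegrand x).comp (by fun_prop)).aestronglyMeasurable

/-- The right side of the rectangle does not contribute in the limit. -/
lemma tendsto_right_side {lam : ℝ} (hlam : 0 < lam) (x : ℝ) :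
    Tendsto (fun R : ℝ => ∫ s in (0:ℝ)..lam, airyIntegrand x (R + s * Complex.I)) atTop (𝓝 0) := by
  have key : Tendsto (fun R : ℝ => ∫ s in (0:ℝ)..lam, airyIntegrand x (R + s * Complex.I)) atTop
      (𝓝 (∫ s in (0:ℝ)..lam, (0:ℂ))) := by
    refine intervalIntegral.tendsto_integral_filter_of_dominated_convergence
      (fun s => Real.exp (s ^ 3 / 3 - x * s)) ?_ ?_ ?_ ?_
    · exact Eventually.of_forall fun R =>
        ((continuous_airyIntegrand x).comp (by fun_prop)).aestronglyMeasurable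
    · refine Eventually.of_forall fun R => ae_of_all _ fun s hs => ?_
      rw [uIoc_of_le hlam.le] at hs
      rw [norm_airyIntegrand]
      have := mul_nonneg hs.1.le (sq_nonneg R)
      exact Real.exp_le_exp.2 (by linarith)
    · exact Continuous.intervalIntegrable (by fun_prop) _ _
    · refine ae_of_all _ fun s hs => ?_
      rw [uIoc_of_le hlam.le] at hs
      rw [tendsto_zero_iff_norm_tendsto_zero]
      simp_rw [norm_airyIntegrand]
      refine Real.tendsto_exp_atBot.comp ?_
      have h : Tendsto (fun R : ℝ => s * R ^ 2) atTop atTop :=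
        (tendsto_pow_atTop two_ne_zero).const_mul_atTop hs.1
      simpa only [sub_eq_add_neg, Function.comp_apply] using
        tendsto_atBot_add_const_left atTop (s ^ 3 / 3 + -(x * s)) (tendsto_neg_atTop_atBot.comp h)
  simpa using key

/-- On the left side of the rectangle the integrand is real, so its integral along the imaginary
axis is purely imaginary. -/
lemma left_side_im (lam x : ℝ) :
    (∫ s in (0:ℝ)..lam, airyIntegrand x (s * Complex.I)).im = 0 := by
  have h : ∀ s : ℝ, airyIntegrand x (s * Complex.I) = ((Real.exp (s ^ 3 / 3 - x * s) : ℝ) : ℂ) := by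
    intro s
    rw [airyIntegrand, Complex.ofReal_exp]
    congr 1
    push_cast
    linear_combination (x * s + s ^ 3 / 3 * (Complex.I ^ 2 - 1)) * Complex.I_sq
  simp_rw [h]
  rw [intervalIntegral.integral_ofReal, Complex.ofReal_im]

lemma airyIntegrand_ofReal_re (x t : ℝ) :
    (airyIntegrand x t).re = Real.cos (t ^ 3 / 3 + x * t) := by
  have h : Complex.I * ((t : ℂ) ^ 3 / 3 + x * t) =
      ((t ^ 3 / 3 + x * t : ℝ) : ℂ) * Complex.I := by
    push_cast
    ring
  rw [airyIntegrand, h, Complex.exp_ofReal_mul_I_re]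

/-- Cauchy's theorem on `[0, R] × [0, lam]`, real part. -/
lemma integral_cos_eq (lam x R : ℝ) :
    ∫ t in (0:ℝ)..R, Real.cos (t ^ 3 / 3 + x * t) =
      (∫ t in (0:ℝ)..R, airyIntegrand x (t + lam * Complex.I)).re +
        (∫ s in (0:ℝ)..lam, airyIntegrand x (R + s * Complex.I)).im := by
  have h := Complex.integral_boundary_rect_eq_zero_of_differentiableOn (airyIntegrand x) 0
    (R + lam * Complex.I) (differentiable_airyIntegrand x).differentiableOn
  simp only [Complex.zero_re, Complex.zero_im, Complex.add_re, Complex.ofReal_re, Complex.mul_re,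
    Complex.I_re, Complex.I_im, Complex.ofReal_im, Complex.add_im, Complex.mul_im, mul_zero,
    mul_one, zero_mul, sub_zero, add_zero, zero_add, Complex.ofReal_zero, smul_eq_mul] at h
  have hre := congrArg Complex.re h
  have hcos : (∫ t in (0:ℝ)..R, airyIntegrand x t).re =
      ∫ t in (0:ℝ)..R, Real.cos (t ^ 3 / 3 + x * t) := by
    have hi : IntervalIntegrable (fun t : ℝ => airyIntegrand x t) volume 0 R :=
      ((continuous_airyIntegrand x).comp Complex.continuous_ofReal).intervalIntegrable _ _
    have := Complex.reCLM.intervalIntegral_comp_comm hi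
    simp only [Complex.reCLM_apply, airyIntegrand_ofReal_re] at this
    exact this.symm
  have hleft := left_side_im lam x
  simp only [Complex.add_re, Complex.sub_re, Complex.mul_re, Complex.I_re, Complex.I_im, zero_mul,
    one_mul, zero_sub, Complex.zero_re, hleft, hcos] at hre
  linarith

/-- The Airy function as an absolutely convergent integral along `Im w = lam`. -/
lemma Ai_eq {lam : ℝ} (hlam : 0 < lam) (x : ℝ) :
    Ai x = (1 / Real.pi) * (∫ t in Ioi (0:ℝ), airyIntegrand x (t + lam * Complex.I)).re := by
  unfold Ai
  congr 1
  refine Tendsto.limUnder_eq ?_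
  simp_rw [integral_cos_eq lam x]
  have h1 := intervalIntegral_tendsto_integral_Ioi 0
    (integrable_airyIntegrand hlam x).integrableOn tendsto_id
  have h2 := (Complex.continuous_re.tendsto _).comp h1
  have h3 := (Complex.continuous_im.tendsto _).comp (tendsto_right_side hlam x)
  simpa using h2.add h3

lemma measurable_Ai : Measurable Ai := by
  have h : Ai = fun x => (1 / Real.pi) *
      (∫ t in Ioi (0:ℝ), airyIntegrand x (t + (1:ℝ) * Complex.I)).re :=
    funext fun x => Ai_eq one_pos x
  have hm : StronglyMeasurable fun x : ℝ =>
      ∫ t in Ioi (0:ℝ), airyIntegrand x (t + (1:ℝ) * Complex.I) :=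
    (continuous_airyIntegrand_uncurry 1).stronglyMeasurable.integral_prod_right'
  rw [h]
  exact (Complex.measurable_re.comp hm.measurable).const_mul _

/-- Transfers a pointwise bound on a contour integrand to the real part of its integral. -/
lemma contour_bound {g : ℝ → ℂ} {b : ℝ → ℝ} {K : ℝ} (hb : Integrable b)
    (hg : ∀ t, ‖g t‖ ≤ K * b t) :
    |(1 / Real.pi) * (∫ t in Ioi (0:ℝ), g t).re| ≤
      K * ((1 / Real.pi) * ∫ t in Ioi (0:ℝ), b t) := by
  rw [abs_mul, abs_of_pos (by positivity : 0 < 1 / Real.pi), mul_left_comm]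
  refine mul_le_mul_of_nonneg_left ?_ (by positivity)
  refine (Complex.abs_re_le_norm _).trans ?_
  rw [← integral_const_mul]
  exact norm_integral_le_of_norm_le (hb.integrableOn.const_mul K) (ae_of_all _ hg)

lemma Ai_bound {lam : ℝ} (hlam : 0 < lam) : ∃ C, ∀ x, |Ai x| ≤ C * Real.exp (-lam * x) := by
  refine ⟨Real.exp (lam ^ 3 / 3) *
    ((1 / Real.pi) * ∫ t in Ioi (0:ℝ), Real.exp (-lam * t ^ 2)), fun x => ?_⟩
  rw [Ai_eq hlam]
  refine (contour_bound (integrable_exp_neg_mul_sq hlam)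
    fun t => (norm_airyIntegrand_shift lam x t).le).trans_eq ?_
  ring

/-- `‖exp z - 1‖ ≤ ‖z‖` on the closed left half-plane, by the mean value inequality. -/
lemma norm_exp_sub_one_le_of_re_nonpos {z : ℂ} (hz : z.re ≤ 0) : ‖Complex.exp z - 1‖ ≤ ‖z‖ := by
  have h := (convex_halfSpace_re_le 0).norm_image_sub_le_of_norm_hasDerivWithin_le
    (f := Complex.exp) (f' := Complex.exp) (C := 1) (x := 0) (y := z)
    (fun w _ => (Complex.hasDerivAt_exp w).hasDerivWithinAt)
    (fun w hw => by
      rw [Complex.norm_exp]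
      exact Real.exp_le_one_iff.2 hw) (by simp) hz
  simpa using h

lemma norm_airyIntegrand_sub_le {lam α : ℝ} (hlam : 0 < lam) (hα : 0 < α) (x t : ℝ) :
    ‖airyIntegrand (x + α) (t + lam * Complex.I) - airyIntegrand x (t + lam * Complex.I)‖ ≤
      α * (Real.exp (lam ^ 3 / 3) * Real.exp (-lam * x)) *
        ((|t| + lam) * Real.exp (-lam * t ^ 2)) := by
  set w : ℂ := t + lam * Complex.I with hw
  have hfac : airyIntegrand (x + α) w - airyIntegrand x w =
      airyIntegrand x w * (Complex.exp (Complex.I * (α * w)) - 1) := by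
    rw [mul_sub, mul_one, airyIntegrand, airyIntegrand, ← Complex.exp_add]
    congr 2
    push_cast
    ring
  have hre : (Complex.I * (α * w)).re ≤ 0 := by
    have := mul_pos hα hlam
    simp [hw]
    linarith
  have hnw : ‖w‖ ≤ |t| + lam := by
    refine (norm_add_le _ _).trans_eq ?_
    simp [abs_of_pos hlam]
  have h1 : ‖Complex.exp (Complex.I * (α * w)) - 1‖ ≤ α * (|t| + lam) := by
    refine (norm_exp_sub_one_le_of_re_nonpos hre).trans ?_
    rw [norm_mul, norm_mul, Complex.norm_I, one_mul, Complex.norm_real, Real.norm_eq_abs,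
      abs_of_pos hα]
    exact mul_le_mul_of_nonneg_left hnw hα.le
  rw [hfac, norm_mul, hw, norm_airyIntegrand_shift, ← hw]
  refine (mul_le_mul_of_nonneg_left h1 (by positivity)).trans_eq ?_
  ring

lemma Ai_diff_bound {lam : ℝ} (hlam : 0 < lam) :
    ∃ C, ∀ α x, 0 < α → |Ai (x + α) - Ai x| ≤ α * C * Real.exp (-lam * x) := by
  refine ⟨Real.exp (lam ^ 3 / 3) *
    ((1 / Real.pi) * ∫ t in Ioi (0:ℝ), (|t| + lam) * Real.exp (-lam * t ^ 2)), fun α x hα => ?_⟩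
  rw [Ai_eq hlam, Ai_eq hlam, ← mul_sub, ← Complex.sub_re,
    ← integral_sub (integrable_airyIntegrand hlam _).integrableOn
      (integrable_airyIntegrand hlam _).integrableOn]
  refine (contour_bound (integrable_gaussian_weight hlam)
    (norm_airyIntegrand_sub_le hlam hα x)).trans_eq ?_
  ring

lemma integrableOn_exp_two {lam : ℝ} (hlam : 0 < lam) :
    IntegrableOn (fun z : ℝ => Real.exp (-(2 * lam) * z)) (Ioi 0) :=
  integrableOn_exp_mul_Ioi (by linarith) 0

lemma integrableOn_airyKernel {lam : ℝ} (hlam : 0 < lam) (x y : ℝ) :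
    IntegrableOn (fun z => Ai (x + z) * Ai (y + z)) (Ioi 0) := by
  obtain ⟨C, hC⟩ := Ai_bound hlam
  refine ((integrableOn_exp_two hlam).const_mul
    (C * C * Real.exp (-lam * x) * Real.exp (-lam * y))).mono' ?_ (ae_of_all _ fun z => ?_)
  · exact ((measurable_Ai.comp (measurable_const_add x)).mul
      (measurable_Ai.comp (measurable_const_add y))).aestronglyMeasurable
  · rw [Real.norm_eq_abs, abs_mul]
    refine (mul_le_mul (hC _) (hC _) (abs_nonneg _) ((abs_nonneg _).trans (hC _))).trans_eq ?_
    rw [show -lam * (x + z) = -lam * x + -lam * z by ring,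
      show -lam * (y + z) = -lam * y + -lam * z by ring,
      show -(2 * lam) * z = -lam * z + -lam * z by ring, Real.exp_add, Real.exp_add, Real.exp_add]
    ring

/-- For all `M > 0` and `λ > 0` there exists `C > 0` such that for all `α > 0` and all
`x, y ≥ −M`, `|A(x+α, y) − A(x, y)| ≤ α·C·e^{−λ(x+y)}`, where `A` is the Airy kernel. -/
theorem airyKernel_shift_bound (M lam : ℝ) (hM : 0 < M) (hlam : 0 < lam) :
    ∃ C > 0, ∀ α x y : ℝ, 0 < α → -M ≤ x → -M ≤ y →
      |airyKernel (x + α) y - airyKernel x y| ≤ α * C * Real.exp (-lam * (x + y)) := by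
  obtain ⟨C₁, h₁⟩ := Ai_bound hlam
  obtain ⟨C₂, h₂⟩ := Ai_diff_bound hlam
  set J := ∫ z in Ioi (0:ℝ), Real.exp (-(2 * lam) * z) with hJ
  refine ⟨|C₂ * C₁ * J| + 1, by positivity, fun α x y hα _ _ => ?_⟩
  have hbound : |airyKernel (x + α) y - airyKernel x y| ≤
      α * (C₂ * C₁ * J) * Real.exp (-lam * (x + y)) := by
    unfold airyKernel
    rw [← integral_sub (integrableOn_airyKernel hlam _ _) (integrableOn_airyKernel hlam _ _),
      show α * (C₂ * C₁ * J) * Real.exp (-lam * (x + y)) =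
        (α * C₂ * C₁ * Real.exp (-lam * (x + y))) * J by ring, hJ, ← integral_const_mul,
      ← Real.norm_eq_abs]
    refine norm_integral_le_of_norm_le ((integrableOn_exp_two hlam).const_mul _)
      (ae_of_all _ fun z => ?_)
    rw [← sub_mul, Real.norm_eq_abs, abs_mul, show x + α + z = x + z + α by ring]
    refine (mul_le_mul (h₂ α (x + z) hα) (h₁ _) (abs_nonneg _)
      ((abs_nonneg _).trans (h₂ α (x + z) hα))).trans_eq ?_
    rw [show -lam * (x + z) = -lam * x + -lam * z by ring,
      show -lam * (y + z) = -lam * y + -lam * z by ring,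
      show -lam * (x + y) = -lam * x + -lam * y by ring,
      show -(2 * lam) * z = -lam * z + -lam * z by ring, Real.exp_add, Real.exp_add, Real.exp_add,
      Real.exp_add]
    ring
  refine hbound.trans ?_
  have := le_abs_self (C₂ * C₁ * J)
  gcongr
  linarith
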